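/- Let R be a basic left Harada algebra with modules P_{ij} := rad^{j-1}(e_{i1}R) as below, let I be the two-sided ideal I := ⊕_{i,j} rad^{n_i-j+1}(e_{ij}R), and set R̄ := R/I. For fixed i and indices 1 ≤ k < l ≤ n_i and 1 ≤ s < t ≤ n_i, the modules P_{ik}/P_{il} and P_{is}/P_{it} are annihilated by I and hence are right R̄-modules, and there is a K-vector space isomorphism Ext^1_R(P_{ik}/P_{il}, P_{is}/P_{it}) ≅ Ext^1_{R̄}(P_{ik}/P_{il}, P_{is}/P_{it}). -/

import Mathlib

/-!
Common setup.  `K` is an algebraically closed field and `R` a finite-dimensional associative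
unital `K`-algebra.  Right `R`-modules are formalized as modules over the opposite ring `Rᵐᵒᵖ`
(so that `MulOpposite.op r • x = x * r`).
-/

open MulOpposite

/-- The right ideal `xR` of a ring `R`, as a submodule of `R` over `Rᵐᵒᵖ`. -/
def rightIdeal (R : Type) [Ring R] (x : R) : Submodule Rᵐᵒᵖ R :=
  Submodule.span Rᵐᵒᵖ {x}

/-- The Jacobson radical of a submodule `N` (the intersection of the maximal submodules of the
module `N`), viewed as a submodule of the ambient module.  Iterating this operation gives the
iterated radicals `rad^k`. -/
def radSub {A M : Type} [Ring A] [AddCommGroup M] [Module A M] (N : Submodule A M) :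
    Submodule A M :=
  Submodule.map N.subtype (sInf {P : Submodule A ↥N | IsCoatom P})

/-- A module is indecomposable if it is nonzero and admits no nontrivial direct sum
decomposition. -/
def IsIndecomposableMod (A M : Type) [Ring A] [AddCommGroup M] [Module A M] : Prop :=
  Nontrivial M ∧ ∀ N N' : Submodule A M, IsCompl N N' → N = ⊥ ∨ N' = ⊥

/-- A module has projective dimension at most one iff it admits a surjection from a projective
module with projective kernel. -/
def PdLeOne (A : Type) [Ring A] (M : Type) [AddCommGroup M] [Module A M] : Prop :=
  ∃ (P : ModuleCat.{0} A) (f : ↥P →ₗ[A] M),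
    Module.Projective A ↥P ∧ Function.Surjective f ∧
      Module.Projective A ↥(LinearMap.ker f)

/-- `Ext¹_A(M,N) = 0`, expressed by the splitting of every short exact sequence
`0 → N → E → M → 0`. -/
def Ext1Zero (A : Type) [Ring A] (M N : Type) [AddCommGroup M] [Module A M]
    [AddCommGroup N] [Module A N] : Prop :=
  ∀ (E : ModuleCat.{0} A) (i : N →ₗ[A] ↥E) (p : ↥E →ₗ[A] M),
    Function.Injective i → Function.Surjective p → LinearMap.range i = LinearMap.ker p →
    ∃ s : M →ₗ[A] ↥E, p.comp s = LinearMap.id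

/-- `X ∈ add T` : `X` is a direct summand of a finite direct sum of copies of `T`. -/
def InAdd (A : Type) [Ring A] (T X : Type) [AddCommGroup T] [Module A T]
    [AddCommGroup X] [Module A X] : Prop :=
  ∃ (k : ℕ) (f : X →ₗ[A] (Fin k → T)) (g : (Fin k → T) →ₗ[A] X),
    g.comp f = LinearMap.id

/-- `T` is a (finitely generated) tilting right `R`-module: projective dimension at most one,
no self-extensions, and there is a short exact sequence `0 → R → T₀ → T₁ → 0` with
`T₀, T₁ ∈ add T`. -/
def IsTiltingRight (R : Type) [Ring R] (T : Type) [AddCommGroup T] [Module Rᵐᵒᵖ T] : Prop :=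
  Module.Finite Rᵐᵒᵖ T ∧ PdLeOne Rᵐᵒᵖ T ∧ Ext1Zero Rᵐᵒᵖ T T ∧
    ∃ (T₀ T₁ : ModuleCat.{0} Rᵐᵒᵖ) (f : R →ₗ[Rᵐᵒᵖ] ↥T₀) (g : ↥T₀ →ₗ[Rᵐᵒᵖ] ↥T₁),
      InAdd Rᵐᵒᵖ T ↥T₀ ∧ InAdd Rᵐᵒᵖ T ↥T₁ ∧
        Function.Injective f ∧ Function.Surjective g ∧ LinearMap.range f = LinearMap.ker g

/-- `T` is basic: it is an (internal) direct sum of pairwise non-isomorphic indecomposable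
submodules. -/
def IsBasicMod (A : Type) [Ring A] (T : Type) [AddCommGroup T] [Module A T] : Prop :=
  ∃ (k : ℕ) (N : Fin k → Submodule A T),
    DirectSum.IsInternal N ∧ (∀ a, IsIndecomposableMod A ↥(N a)) ∧
      ∀ a b, a ≠ b → IsEmpty (↥(N a) ≃ₗ[A] ↥(N b))

/-- The setoid identifying isomorphic modules (among those with property `P`). -/
def isoSetoid (A : Type) [Ring A] (P : ModuleCat.{0} A → Prop) :
    Setoid {M : ModuleCat.{0} A // P M} where
  r M N := Nonempty (↥M.1 ≃ₗ[A] ↥N.1)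
  iseqv := ⟨fun M => ⟨LinearEquiv.refl A ↥M.1⟩, fun ⟨e⟩ => ⟨e.symm⟩,
    fun ⟨e⟩ ⟨f⟩ => ⟨e.trans f⟩⟩

/-- The data exhibiting a ring `R` as a basic left Harada algebra:
a complete set `{e i j}` of orthogonal primitive idempotents with pairwise non-isomorphic
right ideals `(e i j)R` (`R` is basic), such that each `(e i 0)R` is an injective right
module, and `(e i j)R ≅ rad ((e i (j-1))R)` for `j ≥ 1`.  (Indices are shifted by one from
the paper: the paper's `e_{ij}` is `e i (j-1)` here.) -/
structure HaradaData (R : Type) [Ring R] : Type where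
  m : ℕ
  hm : 0 < m
  n : Fin m → ℕ
  hn : ∀ i, 0 < n i
  e : (i : Fin m) → Fin (n i) → R
  idem : ∀ i j, IsIdempotentElem (e i j)
  orth : ∀ p q : Σ i : Fin m, Fin (n i), p ≠ q → e p.1 p.2 * e q.1 q.2 = 0
  sum_eq_one : ∑ p : Σ i : Fin m, Fin (n i), e p.1 p.2 = 1
  indec : ∀ i j, IsIndecomposableMod Rᵐᵒᵖ ↥(rightIdeal R (e i j))
  basic : ∀ p q : Σ i : Fin m, Fin (n i), p ≠ q →
    IsEmpty (↥(rightIdeal R (e p.1 p.2)) ≃ₗ[Rᵐᵒᵖ] ↥(rightIdeal R (e q.1 q.2)))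
  inj : ∀ i, Module.Injective Rᵐᵒᵖ ↥(rightIdeal R (e i ⟨0, hn i⟩))
  rad_iso : ∀ (i : Fin m) (j : Fin (n i)), 0 < j.val →
    Nonempty (↥(rightIdeal R (e i j)) ≃ₗ[Rᵐᵒᵖ]
      ↥(radSub (rightIdeal R (e i ⟨j.val - 1, Nat.lt_of_le_of_lt (Nat.sub_le j.val 1) j.isLt⟩))))

variable {R : Type} [Ring R]

/-- `H.P i j = rad^j ((e i 0)R)`; this is the paper's `P_{i,j+1} = rad^j (e_{i1}R)`,
a submodule of `R`. -/
def HaradaData.P (H : HaradaData R) (i : Fin H.m) (j : Fin (H.n i)) : Submodule Rᵐᵒᵖ R :=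
  radSub^[j.val] (rightIdeal R (H.e i ⟨0, H.hn i⟩))

/-- The quotient module `P_{ik}/P_{il}` (for `l ≥ k` we have `H.P i l ≤ H.P i k`). -/
abbrev HaradaData.Quot (H : HaradaData R) (i : Fin H.m) (k l : Fin (H.n i)) : Type :=
  ↥(H.P i k) ⧸ Submodule.comap (H.P i k).subtype (H.P i l)

/-- The last index (the paper's `n_i`) in `Fin (H.n i)`. -/
def HaradaData.last (H : HaradaData R) (i : Fin H.m) : Fin (H.n i) :=
  ⟨H.n i - 1, Nat.sub_lt (H.hn i) one_pos⟩

/-- The right ideal `I = ⊕_{i,j} rad^{n_i - j + 1}(e_{ij}R)` of the paper. -/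
def HaradaData.I (H : HaradaData R) : Submodule Rᵐᵒᵖ R :=
  ⨆ p : Σ i : Fin H.m, Fin (H.n i),
    radSub^[H.n p.1 - p.2.val] (rightIdeal R (H.e p.1 p.2))

/-- The submodule `T·I` of a right module `T`, for `I` a right ideal of `R`. -/
def smulSub (I : Submodule Rᵐᵒᵖ R) (T : Type) [AddCommGroup T] [Module Rᵐᵒᵖ T] :
    Submodule Rᵐᵒᵖ T :=
  Submodule.span Rᵐᵒᵖ {x : T | ∃ (t : T) (r : R), r ∈ I ∧ x = op r • t}

/-- Restriction of scalars along `π : R →+* S`, turning a right `S`-module into a right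
`R`-module (type synonym). -/
@[nolint unusedArguments]
def RestrictRight {R S : Type} [Ring R] [Ring S] (_ : R →+* S) (N : Type) [AddCommGroup N]
    [Module Sᵐᵒᵖ N] : Type := N

instance {R S : Type} [Ring R] [Ring S] (π : R →+* S) (N : Type) [AddCommGroup N]
    [Module Sᵐᵒᵖ N] : AddCommGroup (RestrictRight π N) := inferInstanceAs (AddCommGroup N)

instance {R S : Type} [Ring R] [Ring S] (π : R →+* S) (N : Type) [AddCommGroup N]
    [Module Sᵐᵒᵖ N] : Module Rᵐᵒᵖ (RestrictRight π N) := Module.compHom N (RingHom.op π)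

/-- The first Ext group `Ext¹_A(X,Y)` of right modules, as a `K`-vector space (computed in the
`K`-linear abelian category of `A`-modules). -/
noncomputable def ext1 (K A : Type) [Field K] [Ring A] [Algebra K A]
    (X Y : ModuleCat.{0} A) : ModuleCat K :=
  ((Ext K (ModuleCat.{0} A) 1).obj (Opposite.op X)).obj Y

/-!
The sequence `0 ⟶ P_{il} ⟶ P_{ik} ⟶ P_{ik}/P_{il} ⟶ 0` is a projective resolution of length one,
because `P_{ij} ≅ e_{ij}R`. Hence `Ext¹_R(P_{ik}/P_{il}, N)` is the cokernel of
`Hom_R(P_{ik}, N) ⟶ Hom_R(P_{il}, N)`. The reduction `V ↦ V/VI` is left adjoint to restriction of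
scalars along `R ⟶ R̄`, so it is right exact and preserves projectives. Transporting the isomorphism
`P_{ij} ≅ e_{ij}R` shows that `P_{ij}I = rad^{n_i}(e_{i1}R)`, a submodule independent of `j`;
therefore `P_{il} ⟶ P_{ik}` stays injective after reduction, and reducing the resolution gives a
projective resolution of `P_{ik}/P_{il}` over `R̄`. When `N` is an `R̄`-module, the adjunction
identifies the two cokernels.
-/

section TwoTermResolution

open CategoryTheory Limits

variable {C : Type*} [Category* C] [Abelian C]

/-- The chain complex `⋯ ⟶ 0 ⟶ X₁ ⟶ X₀` given by a morphism `f : X₁ ⟶ X₀`, with `X₀` in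
degree `0`. -/
noncomputable def twoTermComplex {X₁ X₀ : C} (f : X₁ ⟶ X₀) : ChainComplex C ℕ :=
  ((ChainComplex.single₀ C).obj X₁).augment f zero_comp

theorem isZero_twoTermComplex_X {X₁ X₀ : C} (f : X₁ ⟶ X₀) (n : ℕ) :
    IsZero ((twoTermComplex f).X (n + 2)) :=
  HomologicalComplex.isZero_single_obj_X (.down ℕ) 0 X₁ (n + 1) n.succ_ne_zero

theorem quasiIso_twoTermComplex_toSingle₀ {S : ShortComplex C} (hS : S.ShortExact) :
    QuasiIso ((ChainComplex.toSingle₀Equiv (twoTermComplex S.f) S.X₃).symm ⟨S.g, S.zero⟩) where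
  quasiIsoAt n := by
    obtain _ | _ | n := n
    · rw [ChainComplex.quasiIsoAt₀_iff, ShortComplex.quasiIso_iff_of_zeros' _ rfl rfl rfl]
      refine (ShortComplex.exact_and_epi_g_iff_of_iso ?_).2 ⟨hS.exact, hS.epi_g⟩
      refine ShortComplex.isoMk (Iso.refl _) (Iso.refl _) (Iso.refl _) ?_ ?_
      · exact (Category.id_comp _).trans (Category.comp_id _).symm
      · refine (Category.id_comp _).trans (Eq.trans ?_ (Category.comp_id _).symm)
        exact (ChainComplex.toSingle₀Equiv_symm_apply_f_zero
          (C := twoTermComplex S.f) S.g S.zero).symm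
    · rw [quasiIsoAt_iff_exactAt' (hL := ChainComplex.exactAt_succ_single_obj ..),
        HomologicalComplex.exactAt_iff' _ 2 1 0 (by simp) (by simp)]
      exact (ShortComplex.exact_iff_mono _ ((isZero_twoTermComplex_X S.f 0).eq_of_src _ _)).2
        hS.mono_f
    · rw [quasiIsoAt_iff_exactAt' (hL := ChainComplex.exactAt_succ_single_obj ..),
        HomologicalComplex.exactAt_iff' _ (n + 3) (n + 2) (n + 1) (by simp) (by simp)]
      exact ShortComplex.exact_of_isZero_X₂ _ (isZero_twoTermComplex_X S.f n)

/-- A short exact sequence with projective first two terms, as a projective resolution of its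
third term. -/
noncomputable def twoTermResolution {S : ShortComplex C} (hS : S.ShortExact)
    [Projective S.X₁] [Projective S.X₂] : ProjectiveResolution S.X₃ where
  complex := twoTermComplex S.f
  projective
    | 0 => inferInstanceAs (Projective S.X₂)
    | 1 => inferInstanceAs (Projective S.X₁)
    | n + 2 => (isZero_twoTermComplex_X S.f n).projective
  π := _
  quasiIso := quasiIso_twoTermComplex_toSingle₀ hS

variable [EnoughProjectives C] (K : Type*) [Ring K] [Linear K C]

/-- The computation of `Ext¹(X₃, N)` from a projective resolution `0 ⟶ X₁ ⟶ X₂ ⟶ X₃ ⟶ 0` of length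
one, as the cokernel of `Hom(X₂, N) ⟶ Hom(X₁, N)`. -/
noncomputable def extOneIsoCokernel {S : ShortComplex C} (hS : S.ShortExact)
    [Projective S.X₁] [Projective S.X₂] (N : C) :
    ((Ext K C 1).obj (.op S.X₃)).obj N ≅ cokernel (((linearYoneda K C).obj N).map S.f.op) := by
  let L := (twoTermResolution hS).complex.linearYonedaObj K N
  have d_one_two_eq_zero : (L.sc' 0 1 2).g = 0 := by
    ext (φ : _ ⟶ _)
    exact (isZero_twoTermComplex_X S.f 0).eq_of_src _ _
  have := (L.sc' 0 1 2).isIso_homologyι d_one_two_eq_zero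
  exact (twoTermResolution hS).isoExt 1 N ≪≫ L.homologyIsoSc' 0 1 2 (by simp) (by simp) ≪≫
    asIso (L.sc' 0 1 2).homologyι ≪≫ (L.sc' 0 1 2).opcyclesIsoCokernel

end TwoTermResolution

section Adjunction

open CategoryTheory Limits

universe v

variable {C D : Type*} [Category.{v} C] [Category.{v} D] {F : C ⥤ D} {G : D ⥤ C}

/-- The hom-set bijection of an adjunction with `K`-linear right adjoint, as a `K`-linear
equivalence. -/
def adjunctionHomLinearEquiv [Preadditive C] [Preadditive D] (adj : F ⊣ G) (K : Type*) [Ring K]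
    [Linear K C] [Linear K D] [G.Additive] [G.Linear K] (X : C) (Y : D) :
    (F.obj X ⟶ Y) ≃ₗ[K] (X ⟶ G.obj Y) :=
  have := adj.left_adjoint_additive
  { adj.homAddEquiv X Y with
    map_smul' := fun c φ => by simp [Adjunction.homEquiv_unit] }

variable [Abelian C] [Abelian D]

theorem shortExact_map_of_leftAdjoint [F.Additive] (adj : F ⊣ G) {S : ShortComplex C}
    (hS : S.ShortExact) [Mono (F.map S.f)] : (S.map F).ShortExact := by
  have := adj.leftAdjoint_preservesColimits
  have := hS.epi_g
  exact { exact := hS.exact.map_of_epi_of_preservesCokernel F inferInstance inferInstance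
          mono_f := inferInstanceAs (Mono (F.map S.f))
          epi_g := inferInstanceAs (Epi (F.map S.g)) }

/-- The change-of-category isomorphism for `Ext¹` along an adjunction `F ⊣ G`, for an object with
a projective resolution of length one whose injectivity is preserved by `F`. -/
noncomputable def extOneIsoOfAdjunction [EnoughProjectives C] [EnoughProjectives D]
    (adj : F ⊣ G) (K : Type*) [Ring K] [Linear K C] [Linear K D] [G.Additive] [G.Linear K]
    [G.PreservesEpimorphisms] {S : ShortComplex C} (hS : S.ShortExact)
    [Projective S.X₁] [Projective S.X₂] [Mono (F.map S.f)] (Y : D) :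
    ((Ext K C 1).obj (.op S.X₃)).obj (G.obj Y) ≅ ((Ext K D 1).obj (.op (F.obj S.X₃))).obj Y :=
  have := adj.left_adjoint_additive
  have : Projective (S.map F).X₁ := adj.map_projective S.X₁ inferInstance
  have : Projective (S.map F).X₂ := adj.map_projective S.X₂ inferInstance
  extOneIsoCokernel K hS (G.obj Y) ≪≫
    cokernel.mapIso _ _ (adjunctionHomLinearEquiv adj K S.X₂ Y).symm.toModuleIso
      (adjunctionHomLinearEquiv adj K S.X₁ Y).symm.toModuleIso (by
        refine ModuleCat.hom_ext (LinearMap.ext fun φ => ?_)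
        exact adj.homEquiv_naturality_left_symm S.f φ) ≪≫
    (extOneIsoCokernel K (shortExact_map_of_leftAdjoint adj hS) Y).symm

end Adjunction

section Reduction

open CategoryTheory

universe v

theorem ker_smul_top_le_ker {A B V W : Type*} [Ring A] [Ring B] {ρ : A →+* B} [AddCommGroup V]
    [Module A V] [AddCommGroup W] [Module B W] (f : V →ₛₗ[ρ] W) :
    RingHom.ker ρ • (⊤ : Submodule A V) ≤ f.ker :=
  Submodule.smul_le.2 fun a ha v _ => by
    rw [LinearMap.mem_ker, map_smulₛₗ, RingHom.mem_ker.1 ha, zero_smul]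

section Functor

variable {A B : Type*} [Ring A] [Ring B] {ρ : A →+* B} (hρ : Function.Surjective ρ)

/-- The reduction `V / (ker ρ)V` of an `A`-module `V`, with its induced `B`-module structure, for a
surjective ring homomorphism `ρ : A →+* B`. This is `B ⊗_A V`, avoiding tensor products over a
noncommutative ring. -/
noncomputable def reductionObj (V : ModuleCat.{v} A) : ModuleCat.{v} B :=
  letI : Module B (V ⧸ RingHom.ker ρ • (⊤ : Submodule A V)) :=
    Module.compHom _ (RingHom.quotientKerEquivOfSurjective hρ).symm.toRingHom
  ModuleCat.of B (V ⧸ RingHom.ker ρ • (⊤ : Submodule A V))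

/-- The projection `V → V / (ker ρ)V`, semilinear along `ρ`. -/
noncomputable def toReduction (V : ModuleCat.{v} A) : V →ₛₗ[ρ] reductionObj hρ V where
  __ := (RingHom.ker ρ • (⊤ : Submodule A V)).mkQ.toAddHom
  map_smul' a v := by
    have symm_apply : (RingHom.quotientKerEquivOfSurjective hρ).symm (ρ a) =
        Ideal.Quotient.mk (RingHom.ker ρ) a :=
      (RingHom.quotientKerEquivOfSurjective hρ).symm_apply_eq.2 rfl
    exact (congrArg (· • (RingHom.ker ρ • (⊤ : Submodule A V)).mkQ v) symm_apply).symm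

theorem toReduction_surjective (V : ModuleCat.{v} A) : Function.Surjective (toReduction hρ V) :=
  Submodule.mkQ_surjective _

theorem ker_toReduction (V : ModuleCat.{v} A) :
    (toReduction hρ V).ker = RingHom.ker ρ • (⊤ : Submodule A V) :=
  Submodule.ext fun _ => Submodule.Quotient.mk_eq_zero _

/-- The factorization through `V / (ker ρ)V` of a `ρ`-semilinear map out of `V`. -/
noncomputable def reductionLift {V : ModuleCat.{v} A} {W : ModuleCat.{v} B} (f : V →ₛₗ[ρ] W) :
    reductionObj hρ V →ₗ[B] W where
  __ := QuotientAddGroup.lift _ f.toAddMonoidHom (ker_smul_top_le_ker f)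
  map_smul' b x := by
    obtain ⟨a, rfl⟩ := hρ b
    obtain ⟨v, rfl⟩ := toReduction_surjective hρ V x
    rw [← map_smulₛₗ]
    exact map_smulₛₗ f a v

/-- The universal property of the reduction: `B`-linear maps out of `V / (ker ρ)V` are `A`-linear
maps out of `V`. -/
noncomputable def reductionHomEquiv (V : ModuleCat.{v} A) (W : ModuleCat.{v} B) :
    (reductionObj hρ V ⟶ W) ≃ (V ⟶ (ModuleCat.restrictScalars ρ).obj W) where
  toFun φ := ModuleCat.ofHom (Y := (ModuleCat.restrictScalars ρ).obj W)
    { φ.hom.comp (toReduction hρ V) with }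
  invFun ψ := ModuleCat.ofHom (X := reductionObj hρ V) (reductionLift hρ { ψ.hom with })
  left_inv φ := by
    ext x
    obtain ⟨v, rfl⟩ := toReduction_surjective hρ V x
    rfl
  right_inv ψ := rfl

/-- The functor `V ↦ V / (ker ρ)V`. -/
noncomputable def reduction : ModuleCat.{v} A ⥤ ModuleCat.{v} B :=
  Adjunction.leftAdjointOfEquiv (G := ModuleCat.restrictScalars ρ) (reductionHomEquiv hρ)
    fun _ _ _ _ _ => rfl

/-- Reduction is left adjoint to restriction of scalars. -/
noncomputable def reductionAdjunction : reduction hρ ⊣ ModuleCat.restrictScalars.{v} ρ :=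
  Adjunction.adjunctionOfEquivLeft _ _

theorem mono_reduction_map {V W : ModuleCat.{v} A} (f : V ⟶ W)
    (hf : (RingHom.ker ρ • (⊤ : Submodule A W)).comap f.hom ≤ RingHom.ker ρ • ⊤) :
    Mono ((reduction hρ).map f) := by
  rw [ModuleCat.mono_iff_injective, injective_iff_map_eq_zero]
  intro x hx
  obtain ⟨v, rfl⟩ := toReduction_surjective hρ V x
  have map_mem_ker : f v ∈ (toReduction hρ W).ker := hx
  rw [ker_toReduction] at map_mem_ker
  exact (ker_toReduction hρ V).ge (hf map_mem_ker)

theorem full_restrictScalars_of_surjective (hρ : Function.Surjective ρ) :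
    (ModuleCat.restrictScalars.{v} ρ).Full where
  map_surjective f := ⟨ModuleCat.ofHom
    { f.hom with
      map_smul' b v := by
        obtain ⟨a, rfl⟩ := hρ b
        exact f.hom.map_smul a v }, rfl⟩

instance preservesEpimorphisms_restrictScalars :
    (ModuleCat.restrictScalars.{v} ρ).PreservesEpimorphisms where
  preserves _ h := by rwa [ModuleCat.epi_iff_surjective] at h ⊢

end Functor

variable {K : Type*} [Field K] {A B : Type v} [Ring A] [Ring B] [Algebra K A] [Algebra K B]

/-- The isomorphism `Ext¹_A(X, Y) ≅ Ext¹_B(X, Y)` for `B`-modules `X` and `Y` along a surjection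
`ρ : A → B`, when `X` has over `A` a projective resolution of length one whose injectivity is
preserved by reduction. -/
noncomputable def extOneIsoOfSurjective {ρ : A →ₐ[K] B} (hρ : Function.Surjective ρ)
    {S : ShortComplex (ModuleCat.{v} A)} (hS : S.ShortExact) [Projective S.X₁] [Projective S.X₂]
    (hf : (RingHom.ker ρ.toRingHom • (⊤ : Submodule A S.X₂)).comap S.f.hom ≤
      RingHom.ker ρ.toRingHom • ⊤)
    {X : ModuleCat.{v} B} (eX : (ModuleCat.restrictScalars ρ.toRingHom).obj X ≅ S.X₃)
    (Y : ModuleCat.{v} B) :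
    ((Ext K (ModuleCat.{v} A) 1).obj (.op S.X₃)).obj
        ((ModuleCat.restrictScalars ρ.toRingHom).obj Y) ≅
      ((Ext K (ModuleCat.{v} B) 1).obj (.op X)).obj Y :=
  have := full_restrictScalars_of_surjective.{v} hρ
  have := mono_reduction_map hρ S.f hf
  let adj := reductionAdjunction.{v} hρ
  -- Restriction is fully faithful, so the counit identifies the reduction of `X` with `X`.
  let reductionIso : X ≅ (reduction hρ).obj S.X₃ :=
    (asIso (adj.counit.app X)).symm ≪≫ (reduction hρ).mapIso eX
  extOneIsoOfAdjunction adj K hS Y ≪≫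
    ((Ext K (ModuleCat.{v} B) 1).mapIso reductionIso.op).app Y

end Reduction

section Radical

variable {A M M' : Type} [Ring A] [AddCommGroup M] [Module A M] [AddCommGroup M'] [Module A M']

theorem radSub_le (N : Submodule A M) : radSub N ≤ N :=
  Submodule.map_subtype_le N _

theorem radSub_iterate_antitone (N : Submodule A M) : Antitone fun k => radSub^[k] N :=
  antitone_nat_of_succ_le fun k => by
    rw [Function.iterate_succ_apply']
    exact radSub_le _

theorem radSub_map_of_injective {f : M →ₗ[A] M'} (hf : Function.Injective f)
    (N : Submodule A M) : radSub (N.map f) = (radSub N).map f := by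
  let φ := N.equivMapOfInjective f hf
  calc radSub (N.map f)
      = ((Module.jacobson A N).map φ.toLinearMap).map (N.map f).subtype :=
        congrArg (Submodule.map _) (Module.map_jacobson_of_bijective φ.bijective).symm
    _ = ((Module.jacobson A N).map N.subtype).map f := by
        rw [← Submodule.map_comp, ← Submodule.map_comp]; rfl
    _ = (radSub N).map f := rfl

theorem radSub_iterate_map_of_injective {f : M →ₗ[A] M'} (hf : Function.Injective f)
    (k : ℕ) (N : Submodule A M) : radSub^[k] (N.map f) = (radSub^[k] N).map f :=
  have semiconj : Function.Semiconj (Submodule.map f) radSub radSub :=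
    fun N => (radSub_map_of_injective hf N).symm
  (semiconj.iterate_right k N).symm

variable {N : Submodule A M} {N' : Submodule A M'}

theorem nonempty_radSub_equiv (φ : N ≃ₗ[A] N') : Nonempty (radSub N ≃ₗ[A] radSub N') :=
  ⟨(Submodule.equivMapOfInjective _ N.subtype_injective _).symm ≪≫ₗ φ.submoduleMap _ ≪≫ₗ
    .ofEq _ _ (Module.map_jacobson_of_bijective φ.bijective) ≪≫ₗ
    Submodule.equivMapOfInjective _ N'.subtype_injective _⟩

theorem ideal_smul_eq_radSub_iterate_congr (φ : N ≃ₗ[A] N') {J : Ideal A} {k : ℕ}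
    (h : J • N' = radSub^[k] N') : J • N = radSub^[k] N := by
  have hφ : Function.Injective (N'.subtype ∘ₗ φ.toLinearMap) :=
    N'.subtype_injective.comp φ.injective
  have map_top : (⊤ : Submodule A N).map (N'.subtype ∘ₗ φ.toLinearMap) = N' := by simp
  rw [← map_top, radSub_iterate_map_of_injective hφ,
    ← Submodule.map_smul''] at h
  rw [← N.map_subtype_top, radSub_iterate_map_of_injective N.subtype_injective,
    ← Submodule.map_smul'', Submodule.map_injective_of_injective hφ h]

end Radical

section RightIdeal

theorem mem_rightIdeal {x v : R} : v ∈ rightIdeal R x ↔ ∃ r, x * r = v :=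
  Submodule.mem_span_singleton.trans op_surjective.exists

theorem mul_eq_self_of_mem_rightIdeal {e v : R} (he : IsIdempotentElem e)
    (hv : v ∈ rightIdeal R e) : e * v = v := by
  obtain ⟨r, rfl⟩ := mem_rightIdeal.1 hv
  rw [← mul_assoc, he.eq]

theorem projective_rightIdeal {e : R} (he : IsIdempotentElem e) :
    Module.Projective Rᵐᵒᵖ (rightIdeal R e) := by
  have : Module.Projective Rᵐᵒᵖ R := .of_equiv (opLinearEquiv Rᵐᵒᵖ : R ≃ₗ[Rᵐᵒᵖ] Rᵐᵒᵖ).symm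
  refine .of_split (rightIdeal R e).subtype
    ((LinearMap.mulLeft Rᵐᵒᵖ e).codRestrict (rightIdeal R e) fun r => mem_rightIdeal.2 ⟨r, rfl⟩) ?_
  ext v
  exact mul_eq_self_of_mem_rightIdeal he v.2

end RightIdeal

namespace HaradaData

open CategoryTheory

variable (H : HaradaData R)

theorem e_mul_mem_radSub_iterate {z : R} (hz : z ∈ H.I) (i : Fin H.m) (j : Fin (H.n i)) :
    H.e i j * z ∈ radSub^[H.n i - j] (rightIdeal R (H.e i j)) := by
  induction hz using Submodule.iSup_induction' with
  | zero => rw [mul_zero]; exact zero_mem _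
  | add x y _ _ hx hy => rw [mul_add]; exact add_mem hx hy
  | mem q w hw =>
    have hwq := radSub_iterate_antitone _ (Nat.zero_le _) hw
    obtain rfl | hq := eq_or_ne ⟨i, j⟩ q
    · rwa [mul_eq_self_of_mem_rightIdeal (H.idem i j) hwq]
    · obtain ⟨r, rfl⟩ := mem_rightIdeal.1 hwq
      rw [← mul_assoc, H.orth ⟨i, j⟩ q hq, zero_mul]
      exact zero_mem _

theorem nonempty_P_equiv_rightIdeal (i : Fin H.m) :
    ∀ j : Fin (H.n i), Nonempty (H.P i j ≃ₗ[Rᵐᵒᵖ] rightIdeal R (H.e i j))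
  | ⟨0, _⟩ => ⟨.refl _ _⟩
  | ⟨j + 1, hj⟩ => by
    obtain ⟨φ⟩ := nonempty_P_equiv_rightIdeal i ⟨j, by omega⟩
    obtain ⟨radφ⟩ := nonempty_radSub_equiv φ
    obtain ⟨χ⟩ := H.rad_iso i ⟨j + 1, hj⟩ j.succ_pos
    have P_succ : H.P i ⟨j + 1, hj⟩ = radSub (H.P i ⟨j, by omega⟩) :=
      Function.iterate_succ_apply' ..
    rw [P_succ]
    exact ⟨radφ.trans χ.symm⟩

theorem projective_P (i : Fin H.m) (j : Fin (H.n i)) : Module.Projective Rᵐᵒᵖ (H.P i j) := by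
  obtain ⟨φ⟩ := H.nonempty_P_equiv_rightIdeal i j
  have := projective_rightIdeal (H.idem i j)
  exact .of_equiv φ.symm

theorem P_antitone (i : Fin H.m) : Antitone (H.P i) := fun _ _ hkl =>
  radSub_iterate_antitone _ hkl

/-- The sequence `0 ⟶ P_{il} ⟶ P_{ik} ⟶ P_{ik}/P_{il} ⟶ 0`, a projective resolution of
`P_{ik}/P_{il}`. -/
def quotShortComplex {i : Fin H.m} {k l : Fin (H.n i)} (hkl : k ≤ l) :
    ShortComplex (ModuleCat.{0} Rᵐᵒᵖ) :=
  .mk (ModuleCat.ofHom (Submodule.inclusion (H.P_antitone i hkl)))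
    (ModuleCat.ofHom ((H.P i l).comap (H.P i k).subtype).mkQ)
    (by ext v; exact (Submodule.Quotient.mk_eq_zero _).2 v.2)

instance {i : Fin H.m} {k l : Fin (H.n i)} (hkl : k ≤ l) :
    Projective (H.quotShortComplex hkl).X₁ :=
  (IsProjective.iff_projective _).1 (H.projective_P i l)

instance {i : Fin H.m} {k l : Fin (H.n i)} (hkl : k ≤ l) :
    Projective (H.quotShortComplex hkl).X₂ :=
  (IsProjective.iff_projective _).1 (H.projective_P i k)

theorem shortExact_quotShortComplex {i : Fin H.m} {k l : Fin (H.n i)} (hkl : k ≤ l) :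
    (H.quotShortComplex hkl).ShortExact where
  exact := by
    rw [ShortComplex.moduleCat_exact_iff]
    intro v hv
    exact ⟨⟨v.1, (Submodule.Quotient.mk_eq_zero ((H.P i l).comap (H.P i k).subtype)).1 hv⟩, rfl⟩
  mono_f := (ModuleCat.mono_iff_injective _).2
    (Submodule.inclusion_injective (H.P_antitone i hkl))
  epi_g := (ModuleCat.epi_iff_surjective _).2 (Submodule.mkQ_surjective _)

-- `J` is `I` regarded as a left ideal of `Rᵐᵒᵖ`, so that `J • N` is the paper's `NI`.
variable {H} {J : Ideal Rᵐᵒᵖ} [J.IsTwoSided] (hJ : ∀ x : R, op x ∈ J ↔ x ∈ H.I)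
include hJ

theorem smul_rightIdeal_eq_radSub_iterate (i : Fin H.m) (j : Fin (H.n i)) :
    J • rightIdeal R (H.e i j) = radSub^[H.n i - j] (rightIdeal R (H.e i j)) := by
  refine le_antisymm (Submodule.smul_le.2 (op_surjective.forall.2 fun r hr v hv => ?_))
    fun v hv => ?_
  · rw [← mul_eq_self_of_mem_rightIdeal (H.idem i j) hv, op_smul_eq_mul, mul_assoc]
    exact H.e_mul_mem_radSub_iterate ((hJ _).1 (J.mul_mem_right (op v) hr)) i j
  · have v_mem_I : v ∈ H.I := Submodule.mem_iSup_of_mem ⟨i, j⟩ hv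
    have v_mem_eR := radSub_iterate_antitone _ (Nat.zero_le _) hv
    rw [← mul_eq_self_of_mem_rightIdeal (H.idem i j) v_mem_eR]
    exact Submodule.smul_mem_smul ((hJ v).2 v_mem_I) (Submodule.mem_span_singleton_self _)

theorem smul_P_eq_radSub_iterate (i : Fin H.m) (j : Fin (H.n i)) :
    J • H.P i j = radSub^[H.n i] (rightIdeal R (H.e i ⟨0, H.hn i⟩)) := by
  obtain ⟨φ⟩ := H.nonempty_P_equiv_rightIdeal i j
  calc J • H.P i j = radSub^[H.n i - j] (H.P i j) :=
        ideal_smul_eq_radSub_iterate_congr φ (smul_rightIdeal_eq_radSub_iterate hJ i j)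
    _ = _ := by rw [P, ← Function.iterate_add_apply, Nat.sub_add_cancel j.2.le]

theorem smul_P_le (i : Fin H.m) (k l : Fin (H.n i)) : J • H.P i k ≤ H.P i l :=
  (smul_P_eq_radSub_iterate hJ i k).trans_le (radSub_iterate_antitone _ l.2.le)

theorem op_smul_quot_eq_zero (i : Fin H.m) (k l : Fin (H.n i)) {r : R} (hr : r ∈ H.I)
    (x : H.Quot i k l) : op r • x = 0 := by
  obtain ⟨v, rfl⟩ := Submodule.mkQ_surjective _ x
  rw [← map_smul, ← LinearMap.mem_ker, Submodule.ker_mkQ]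
  exact smul_P_le hJ i k l (Submodule.smul_mem_smul ((hJ r).2 hr) v.2)

theorem comap_inclusion_smul_top_le {i : Fin H.m} {k l : Fin (H.n i)} (hkl : k ≤ l) :
    (J • (⊤ : Submodule Rᵐᵒᵖ (H.P i k))).comap (Submodule.inclusion (H.P_antitone i hkl)) ≤
      J • ⊤ := fun x hx => by
  rw [Submodule.mem_comap, Submodule.mem_smul_top_iff, Submodule.coe_inclusion,
    smul_P_eq_radSub_iterate hJ] at hx
  rwa [Submodule.mem_smul_top_iff, smul_P_eq_radSub_iterate hJ]

end HaradaData

theorem statement15_general (K R : Type) [Field K] [Ring R] [Algebra K R] (H : HaradaData R)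
    (S : Type) [Ring S] [Algebra K S] (π : R →ₐ[K] S) (hsurj : Function.Surjective π)
    (hker : ∀ x : R, π x = 0 ↔ x ∈ H.I) (i : Fin H.m) (k l : Fin (H.n i)) (hkl : k ≤ l) :
    (∀ r : R, r ∈ H.I → ∀ x : H.Quot i k l, op r • x = 0) ∧
    ∀ (X Y : ModuleCat.{0} Sᵐᵒᵖ) (N : ModuleCat.{0} Rᵐᵒᵖ),
      Nonempty (RestrictRight π.toRingHom X ≃ₗ[Rᵐᵒᵖ] H.Quot i k l) →
      Nonempty (RestrictRight π.toRingHom Y ≃ₗ[Rᵐᵒᵖ] N) →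
      Nonempty (ext1 K Rᵐᵒᵖ (ModuleCat.of Rᵐᵒᵖ (H.Quot i k l)) N ≃ₗ[K] ext1 K Sᵐᵒᵖ X Y) := by
  have hJ (x : R) : op x ∈ RingHom.ker (AlgHom.op π).toRingHom ↔ x ∈ H.I :=
    (op_eq_zero_iff (π x)).trans (hker x)
  refine ⟨fun r hr x => HaradaData.op_smul_quot_eq_zero hJ i k l hr x, ?_⟩
  rintro X Y N ⟨φX⟩ ⟨φY⟩
  have op_surj : Function.Surjective (AlgHom.op π) := fun b =>
    (hsurj b.unop).imp' op fun _ => congrArg op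
  exact ⟨((((Ext K _ 1).obj _).mapIso φY.symm.toModuleIso) ≪≫
    extOneIsoOfSurjective op_surj (H.shortExact_quotShortComplex hkl)
      (HaradaData.comap_inclusion_smul_top_le hJ hkl) φX.toModuleIso Y).toLinearEquiv⟩

/-- Proposition 4.4(2).  For fixed `i` and `1 ≤ k < l ≤ n_i`,
`1 ≤ s < t ≤ n_i`, the modules `P_{ik}/P_{il}` and `P_{is}/P_{it}` are annihilated by `I`
(hence are right `R̄`-modules, where `R̄ = R/I` is presented by a surjective `K`-algebra
homomorphism `π : R → S` with kernel `I`), and there is a `K`-vector space isomorphism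
`Ext¹_R(P_{ik}/P_{il}, P_{is}/P_{it}) ≅ Ext¹_{R̄}(P_{ik}/P_{il}, P_{is}/P_{it})`. -/
theorem statement15 (K R : Type) [Field K] [IsAlgClosed K] [Ring R] [Algebra K R]
    [FiniteDimensional K R] (H : HaradaData R)
    (S : Type) [Ring S] [Algebra K S] (π : R →ₐ[K] S) (hsurj : Function.Surjective π)
    (hker : ∀ x : R, π x = 0 ↔ x ∈ H.I)
    (i : Fin H.m) (k l s t : Fin (H.n i)) (hkl : k < l) (hst : s < t) :
    (∀ r : R, r ∈ H.I → ∀ x : H.Quot i k l, op r • x = 0) ∧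
    (∀ r : R, r ∈ H.I → ∀ x : H.Quot i s t, op r • x = 0) ∧
    (∀ X Y : ModuleCat.{0} Sᵐᵒᵖ,
      Nonempty (RestrictRight (π.toRingHom) ↥X ≃ₗ[Rᵐᵒᵖ] H.Quot i k l) →
      Nonempty (RestrictRight (π.toRingHom) ↥Y ≃ₗ[Rᵐᵒᵖ] H.Quot i s t) →
      Nonempty
        (↥(ext1 K Rᵐᵒᵖ (ModuleCat.of Rᵐᵒᵖ (H.Quot i k l)) (ModuleCat.of Rᵐᵒᵖ (H.Quot i s t)))
          ≃ₗ[K] ↥(ext1 K Sᵐᵒᵖ X Y))) := by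
  obtain ⟨quot_kl, ext_iso⟩ := statement15_general K R H S π hsurj hker i k l hkl.le
  exact ⟨quot_kl, (statement15_general K R H S π hsurj hker i s t hst.le).1,
    fun X Y => ext_iso X Y (ModuleCat.of _ _)⟩
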